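/- arXiv:1101.4370 — 3 statements merged into one kernel-verified Lean document; each statement's English description precedes it below -/
import Mathlib

section
/- For all n, p ∈ ℕ, the series Σ_{k=0}^{∞} m_n(k; β, c) · m_p(k; β, c) · c^k (β)_k / k! converges and equals (1−c)^{−β} c^{−n} n! (β)_n if n = p, and equals 0 if n ≠ p. -/
/-!
Write `w(k) = c ^ k (β)_k / k!`. The negative binomial series evaluates the mixed moments
`∑ (-k)_j (β + k)_i w(k) = (-c)^j (β)_{i+j} (1 - c)^{-β-i-j}` (`hasSum_moment`): the factor `(-k)_j`
shifts the summation index by `j`, and `(β + k)_i` merges with `(β)_k`. Expanding `m_n` in the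
`(-k)_l`, its pairing with `(β + k)_i` is therefore a multiple of
`∑ l, (-1)^l (n choose l) (β + l)_i`, an `n`-th finite difference of a monic polynomial of
degree `i`: it vanishes for `i < n` and is `(-1)^n n!` for `i = n` (`sum_poch_neg`).
The relation `(-k)_{j+1} = ((β + i + j) - (β + k + i)) (-k)_j` converts this into the pairing
with `(-k)_j` (`hasSum_meixner_mul_poch_neg`). Hence `m_n` is orthogonal to every `m_p` with
`p < n`, and for `p = n` only the leading term of `m_n` contributes.
-/

open Complex Finset Filter Topology

/-- Pochhammer symbol `(a)_k = a (a+1) ⋯ (a+k-1)`. -/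
noncomputable def poch (a : ℂ) (k : ℕ) : ℂ := ∏ i ∈ Finset.range k, (a + i)

/-- The Meixner polynomial `m_n(z; β, c)`. -/
noncomputable def meixner (β c : ℝ) (n : ℕ) (z : ℂ) : ℂ :=
  poch (β : ℂ) n * ∑ k ∈ Finset.range (n + 1),
    poch (-(n : ℂ)) k * poch (-z) k / (poch (β : ℂ) k * (Nat.factorial k : ℂ))
      * (1 - 1 / (c : ℂ)) ^ k

lemma hasSum_of_eq {f g : ℕ → ℂ} {a b : ℂ} (h : HasSum f a) (hf : ∀ k, g k = f k) (ha : b = a) :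
    HasSum g b := by
  rwa [funext hf, ha]

lemma poch_zero (a : ℂ) : poch a 0 = 1 := by simp [poch]

lemma poch_succ (a : ℂ) (k : ℕ) : poch a (k + 1) = poch a k * (a + k) := by
  simp [poch, Finset.prod_range_succ]

lemma poch_add (a : ℂ) (m n : ℕ) : poch a (m + n) = poch a m * poch (a + m) n := by
  simp [poch, Finset.prod_range_add, add_assoc]

lemma poch_eq_eval (a : ℂ) (k : ℕ) : poch a k = (ascPochhammer ℂ k).eval a := by
  induction k with
  | zero => simp [poch]
  | succ k ih => rw [poch_succ, ih, ascPochhammer_succ_eval]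

lemma poch_neg_nat (n k : ℕ) :
    poch (-(n : ℂ)) k = (-1) ^ k * (n.descFactorial k : ℂ) := by
  rw [poch_eq_eval, ascPochhammer_eval_neg_eq_descPochhammer, descPochhammer_eval_eq_descFactorial]

lemma poch_ofReal_ne_zero {β : ℝ} (hβ : 0 < β) (k : ℕ) : poch (β : ℂ) k ≠ 0 := by
  refine Finset.prod_ne_zero_iff.mpr fun i _ => ?_
  have : (0 : ℝ) < β + i := by positivity
  exact_mod_cast this.ne'

/-- Negative binomial series, with the exponent `β + m` split into the part `β` and the power `m`. -/
lemma hasSum_negBinomial {c β : ℝ} (hc0 : 0 < c) (hc1 : c < 1) (m : ℕ) :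
    HasSum (fun k : ℕ => (c : ℂ) ^ k * poch ((β : ℂ) + m) k / (Nat.factorial k : ℂ))
      ((((1 - c) ^ (-β) : ℝ) : ℂ) / (1 - (c : ℂ)) ^ m) := by
  have hpos : (0 : ℝ) < 1 - c := by linarith
  have hne : (1 - (c : ℂ)) ≠ 0 := by exact_mod_cast hpos.ne'
  have h := (one_div_one_sub_cpow_hasFPowerSeriesOnBall_zero ((β : ℂ) + m)).hasSum
    (y := (c : ℂ)) (by
      rw [Metric.mem_eball, edist_zero_right, ← ofReal_norm, ENNReal.ofReal_lt_one]
      simpa [abs_of_pos hc0] using hc1)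
  refine hasSum_of_eq h (fun k => ?_) ?_
  · have h2 := Ring.factorial_nsmul_multichoose_eq_ascPochhammer ((β : ℂ) + m) k
    rw [Polynomial.ascPochhammer_smeval_eq_eval, ← poch_eq_eval, nsmul_eq_mul,
      Ring.multichoose_eq] at h2
    have h3 : (Nat.factorial k : ℂ) ≠ 0 := by exact_mod_cast Nat.factorial_ne_zero k
    simp [← h2]
    field_simp
  · rw [zero_add, cpow_add _ _ hne, cpow_natCast, Complex.ofReal_cpow hpos.le]
    push_cast
    rw [cpow_neg]
    field_simp

lemma hasSum_moment {c β : ℝ} (hc0 : 0 < c) (hc1 : c < 1) (i j : ℕ) :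
    HasSum (fun k : ℕ => poch (-(k : ℂ)) j * poch ((β : ℂ) + k) i *
        ((c : ℂ) ^ k * poch (β : ℂ) k / (Nat.factorial k : ℂ)))
      ((-1) ^ j * (c : ℂ) ^ j * poch (β : ℂ) (i + j) *
        ((((1 - c) ^ (-β) : ℝ) : ℂ) / (1 - (c : ℂ)) ^ (i + j))) := by
  have hz : ∑ k ∈ range j, poch (-(k : ℂ)) j * poch ((β : ℂ) + k) i *
        ((c : ℂ) ^ k * poch (β : ℂ) k / (Nat.factorial k : ℂ)) = 0 := by
    refine Finset.sum_eq_zero fun k hk => ?_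
    rw [poch_neg_nat, Nat.descFactorial_of_lt (Finset.mem_range.mp hk)]
    simp
  rw [← hasSum_nat_add_iff' j, hz, sub_zero]
  have h := (hasSum_negBinomial (β := β) hc0 hc1 (i + j)).mul_left
    ((-1) ^ j * (c : ℂ) ^ j * poch (β : ℂ) (i + j))
  refine hasSum_of_eq h (fun k => ?_) rfl
  have h3 : (Nat.factorial k : ℂ) ≠ 0 := by exact_mod_cast Nat.factorial_ne_zero k
  have h4 : (Nat.factorial (k + j) : ℂ) ≠ 0 := by exact_mod_cast Nat.factorial_ne_zero _
  have h5 : (Nat.factorial (k + j) : ℂ) = Nat.factorial k * (k + j).descFactorial j := by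
    have := Nat.factorial_mul_descFactorial (Nat.le_add_left j k)
    rw [Nat.add_sub_cancel] at this
    exact_mod_cast this.symm
  have h6 : ((k + j).descFactorial j : ℂ) ≠ 0 := fun h0 => h4 (by rw [h5, h0, mul_zero])
  -- both products of Pochhammer symbols are `(β)_{k + j + i}`
  have h7 : poch (β : ℂ) (k + j) * poch ((β : ℂ) + (k + j : ℕ)) i
      = poch (β : ℂ) (i + j) * poch ((β : ℂ) + (i + j : ℕ)) k := by
    rw [← poch_add, ← poch_add]
    congr 1
    ring
  rw [poch_neg_nat, h5]
  have h8 : (-1 : ℂ) ^ j * (c : ℂ) ^ j * poch (β : ℂ) (i + j) *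
      ((c : ℂ) ^ k * poch ((β : ℂ) + (i + j : ℕ)) k / (Nat.factorial k : ℂ))
      = (-1 : ℂ) ^ j * (c : ℂ) ^ j * (c : ℂ) ^ k *
        (poch (β : ℂ) (k + j) * poch ((β : ℂ) + (k + j : ℕ)) i) / (Nat.factorial k : ℂ) := by
    rw [h7]; ring
  rw [h8]
  field_simp
  ring

/-- The left side is, up to the sign `(-1) ^ n`, the `n`-th forward difference at `0` of the monic
polynomial `(b + X)_i`. -/
lemma sum_poch_neg (b : ℂ) {n i : ℕ} (hi : i ≤ n) :
    ∑ l ∈ range (n + 1), poch (-(n : ℂ)) l / (Nat.factorial l : ℂ) * poch (b + l) i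
      = if i = n then (-1) ^ n * (Nat.factorial n : ℂ) else 0 := by
  set P : Polynomial ℂ := (ascPochhammer ℂ i).comp (Polynomial.X + Polynomial.C b) with hP
  have hdeg : P.natDegree = i := by
    rw [hP, Polynomial.natDegree_comp, ascPochhammer_natDegree, Polynomial.natDegree_X_add_C,
      mul_one]
  have hmonic : P.Monic := (monic_ascPochhammer ℂ i).comp_X_add_C b
  have h1 : (fwdDiff (1 : ℂ))^[n] P.eval 0 = if i = n then (Nat.factorial n : ℂ) else 0 := by
    split_ifs with h
    · have := congrFun (Polynomial.fwdDiff_iter_degree_eq_factorial P) 0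
      rw [hdeg, hmonic.leadingCoeff, h] at this
      simpa using this
    · have := congrFun (Polynomial.fwdDiff_iter_eq_zero_of_degree_lt (P := P) (n := n)
        (by omega)) 0
      simpa using this
  rw [fwdDiff_iter_eq_sum_shift] at h1
  have h2 : ∑ l ∈ range (n + 1), poch (-(n : ℂ)) l / (Nat.factorial l : ℂ) * poch (b + l) i
      = (-1) ^ n * ∑ k ∈ range (n + 1),
        ((-1 : ℤ) ^ (n - k) * n.choose k) • P.eval (0 + k • (1 : ℂ)) := by
    rw [Finset.mul_sum]
    refine Finset.sum_congr rfl fun l hl => ?_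
    have hl' : l ≤ n := Nat.lt_succ_iff.mp (Finset.mem_range.mp hl)
    have h3 : (Nat.factorial l : ℂ) ≠ 0 := by exact_mod_cast Nat.factorial_ne_zero l
    have hs : (-1 : ℂ) ^ n * (-1) ^ (n - l) = (-1) ^ l := by
      obtain ⟨d, rfl⟩ := Nat.exists_eq_add_of_le hl'
      rw [Nat.add_sub_cancel_left, pow_add, mul_assoc, ← mul_pow]
      simp
    rw [poch_neg_nat, Nat.descFactorial_eq_factorial_mul_choose, poch_eq_eval, hP,
      Polynomial.eval_comp, ← hs]
    simp [add_comm b]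
    field_simp
  rw [h2, h1]
  split_ifs <;> simp

lemma hasSum_meixner_mul_poch {c β : ℝ} (hc0 : 0 < c) (hc1 : c < 1) (hβ : 0 < β) {n i : ℕ}
    (hi : i ≤ n) :
    HasSum (fun k : ℕ => meixner β c n (k : ℂ) * poch ((β : ℂ) + k) i *
        ((c : ℂ) ^ k * poch (β : ℂ) k / (Nat.factorial k : ℂ)))
      (if i = n then poch (β : ℂ) n * ((((1 - c) ^ (-β) : ℝ) : ℂ) / (1 - (c : ℂ)) ^ n) *
        ((-1) ^ n * (Nat.factorial n : ℂ)) else 0) := by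
  have hc : (c : ℂ) ≠ 0 := by exact_mod_cast hc0.ne'
  have hne : (1 - (c : ℂ)) ≠ 0 := by exact_mod_cast (sub_pos.mpr hc1).ne'
  have h := hasSum_sum (s := range (n + 1)) fun l _ =>
    (hasSum_moment (β := β) hc0 hc1 i l).mul_left
      (poch (β : ℂ) n * (poch (-(n : ℂ)) l / (poch (β : ℂ) l * (Nat.factorial l : ℂ))
        * (1 - 1 / (c : ℂ)) ^ l))
  refine hasSum_of_eq h (fun k => ?_) ?_
  · rw [meixner, Finset.mul_sum, Finset.sum_mul, Finset.sum_mul]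
    refine Finset.sum_congr rfl fun l _ => ?_
    ring
  · have hs : ∀ l ∈ range (n + 1),
        (poch (β : ℂ) n * (poch (-(n : ℂ)) l / (poch (β : ℂ) l * (Nat.factorial l : ℂ))
          * (1 - 1 / (c : ℂ)) ^ l)) * ((-1) ^ l * (c : ℂ) ^ l * poch (β : ℂ) (i + l) *
          ((((1 - c) ^ (-β) : ℝ) : ℂ) / (1 - (c : ℂ)) ^ (i + l)))
        = poch (β : ℂ) n * ((((1 - c) ^ (-β) : ℝ) : ℂ) / (1 - (c : ℂ)) ^ i) *
          (poch (-(n : ℂ)) l / (Nat.factorial l : ℂ) * poch ((β : ℂ) + l) i) := by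
      intro l _
      have h3 : (Nat.factorial l : ℂ) ≠ 0 := by exact_mod_cast Nat.factorial_ne_zero l
      have h4 := poch_ofReal_ne_zero hβ l
      have h5 : (1 - 1 / (c : ℂ)) ^ l * (-1) ^ l * (c : ℂ) ^ l = (1 - (c : ℂ)) ^ l := by
        rw [← mul_pow, ← mul_pow]
        congr 1
        field_simp
        ring
      rw [add_comm i l, poch_add, pow_add, ← h5]
      have h6 : (1 - 1 / (c : ℂ)) ^ l ≠ 0 := by
        intro h0
        rw [h0, zero_mul, zero_mul] at h5
        exact pow_ne_zero l hne h5.symm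
      generalize (1 - 1 / (c : ℂ)) ^ l = u at h6
      field_simp
    rw [Finset.sum_congr rfl hs, ← Finset.mul_sum, sum_poch_neg _ hi]
    split_ifs with h
    · rw [h]
    · simp

/-- The factor `(β + k)_i` is carried along so that the induction on `j` can trade one factor of
`(-k)_{j+1}` for one of `(β + k)_{i+1}`. -/
lemma hasSum_meixner_mul_poch_neg {c β : ℝ} (hc0 : 0 < c) (hc1 : c < 1) (hβ : 0 < β) {n : ℕ}
    (j : ℕ) : ∀ i : ℕ, i + j ≤ n →
    HasSum (fun k : ℕ => meixner β c n (k : ℂ) * (poch (-(k : ℂ)) j * poch ((β : ℂ) + k) i) *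
        ((c : ℂ) ^ k * poch (β : ℂ) k / (Nat.factorial k : ℂ)))
      (if i + j = n then (-1) ^ j * (poch (β : ℂ) n *
        ((((1 - c) ^ (-β) : ℝ) : ℂ) / (1 - (c : ℂ)) ^ n) *
        ((-1) ^ n * (Nat.factorial n : ℂ))) else 0) := by
  induction j with
  | zero =>
    intro i hi
    simpa [poch_zero] using hasSum_meixner_mul_poch hc0 hc1 hβ hi
  | succ j ih =>
    intro i hi
    have h := ((ih i (by omega)).mul_left ((β : ℂ) + i + j)).sub (ih (i + 1) (by omega))
    refine hasSum_of_eq h (fun k => ?_) ?_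
    · rw [poch_succ, poch_succ]
      ring
    · rw [if_neg (show ¬ i + j = n by omega), show i + 1 + j = i + (j + 1) by ring]
      split_ifs
      · ring
      · simp

lemma hasSum_meixner_mul_meixner_of_le {c β : ℝ} (hc0 : 0 < c) (hc1 : c < 1) (hβ : 0 < β)
    {n p : ℕ} (hp : p ≤ n) :
    HasSum
      (fun k : ℕ =>
        meixner β c n (k : ℂ) * meixner β c p (k : ℂ) * (c : ℂ) ^ k * poch (β : ℂ) k
          / (Nat.factorial k : ℂ))
      (if n = p then
        (((1 - c) ^ (-β) : ℝ) : ℂ) * (c : ℂ) ^ (-(n : ℤ)) * (Nat.factorial n : ℂ)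
          * poch (β : ℂ) n
       else 0) := by
  have hc : (c : ℂ) ≠ 0 := by exact_mod_cast hc0.ne'
  have hne : (1 - (c : ℂ)) ≠ 0 := by exact_mod_cast (sub_pos.mpr hc1).ne'
  have h := hasSum_sum (s := range (p + 1)) fun l hl =>
    (hasSum_meixner_mul_poch_neg hc0 hc1 hβ (n := n) l 0
      (by have := Finset.mem_range.mp hl; omega)).mul_left
      (poch (β : ℂ) p * (poch (-(p : ℂ)) l / (poch (β : ℂ) l * (Nat.factorial l : ℂ))
        * (1 - 1 / (c : ℂ)) ^ l))
  refine hasSum_of_eq h (fun k => ?_) ?_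
  · rw [meixner.eq_def β c p, Finset.mul_sum, Finset.mul_sum, Finset.sum_mul, Finset.sum_mul,
      Finset.sum_div]
    refine Finset.sum_congr rfl fun l _ => ?_
    rw [poch_zero]
    ring
  · simp only [zero_add]
    split_ifs with hnp
    · subst hnp
      rw [Finset.sum_eq_single_of_mem n (by simp) (fun l _ hl => by rw [if_neg hl, mul_zero]),
        if_pos rfl, poch_neg_nat, Nat.descFactorial_self]
      have h3 : (Nat.factorial n : ℂ) ≠ 0 := by exact_mod_cast Nat.factorial_ne_zero n
      have h4 := poch_ofReal_ne_zero hβ n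
      have h5 : (1 - 1 / (c : ℂ)) ^ n * (-1) ^ n = (1 - (c : ℂ)) ^ n / (c : ℂ) ^ n := by
        rw [← mul_pow, ← div_pow]
        congr 1
        field_simp
        ring
      have h6 : (-1 : ℂ) ^ n * (-1) ^ n = 1 := by rw [← mul_pow]; simp
      have h7 : ∀ B F W u s d : ℂ, B ≠ 0 → F ≠ 0 →
          B * (s * F / (B * F) * u) * (s * (B * (W / d) * (s * F)))
            = (s * s) * (u * s) / d * W * F * B := by
        intro B F W u s d hB hF
        field_simp
      rw [h7 _ _ _ _ _ _ h4 h3, h5, h6, zpow_neg, zpow_natCast]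
      field_simp
    · refine (Finset.sum_eq_zero fun l hl => ?_).symm
      have := Finset.mem_range.mp hl
      rw [if_neg (by omega), mul_zero]

/-- Discrete orthogonality relation for the Meixner polynomials. -/
theorem meixner_orthogonality (c β : ℝ) (hc0 : 0 < c) (hc1 : c < 1) (hβ : 0 < β)
    (n p : ℕ) :
    HasSum
      (fun k : ℕ =>
        meixner β c n (k : ℂ) * meixner β c p (k : ℂ) * (c : ℂ) ^ k * poch (β : ℂ) k
          / (Nat.factorial k : ℂ))
      (if n = p then
        (((1 - c) ^ (-β) : ℝ) : ℂ) * (c : ℂ) ^ (-(n : ℤ)) * (Nat.factorial n : ℂ)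
          * poch (β : ℂ) n
       else 0) := by
  rcases le_total p n with h | h
  · exact hasSum_meixner_mul_meixner_of_le hc0 hc1 hβ h
  · have h1 := hasSum_meixner_mul_meixner_of_le hc0 hc1 hβ h
    refine hasSum_of_eq h1 (fun k => ?_) ?_
    · ring
    · by_cases hnp : n = p
      · rw [hnp]
      · rw [if_neg hnp, if_neg (Ne.symm hnp)]
end

section
/- The function φ is analytic on ℂ∖(−∞,b] with derivative φ′(z) = Log[(√(bz−1)+√(az−1))/(√(bz−1)−√(az−1))] for all z ∈ ℂ∖(−∞,b], and lim_{z→b, z∉(−∞,b]} φ(z) = 0. -/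
/-!
Since `ab = 1`, we have `bz - 1 = b (z - a)` and `az - 1 = a (z - b)`; off `(-∞, b]` all four
radicands avoid the branch cut of the square root. For `p² = α`, `q² = β`, the quotient
`(p + q) / (p - q)` can only meet `(-∞, 0]`, say at `-u`, if `α (1 + u)² = β (1 - u)²`
(`quot_mem_slitPlane`). For both logarithms in `φ` that relation is linear in `z` with real
coefficients and forces `z` to be real with `z ≤ b`, so both logarithms are holomorphic on the domain.

Differentiating (`hasDerivAt_log_quot`) gives `1 / (z √(bz-1) √(az-1))` for the first logarithm
and `1 / (√(z-a) √(z-b))` for the second. The square root is multiplicative in positive real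
factors, so `√(bz-1) √(az-1) = √(z-a) √(z-b)`, and in `φ'` only the first logarithm survives.

At `z = b` the square roots `√(az-1)` and `√(z-b)` tend to `0` while the other two do not, so both
logarithms tend to `log 1 = 0`.
-/

open Complex Finset Filter Topology

/-- `a := (1−√c)/(1+√c)`. -/
noncomputable def aconst (c : ℝ) : ℝ := (1 - Real.sqrt c) / (1 + Real.sqrt c)

/-- `b := (1+√c)/(1−√c)`. -/
noncomputable def bconst (c : ℝ) : ℝ := (1 + Real.sqrt c) / (1 - Real.sqrt c)

/-- The principal branch of the complex square root. -/
noncomputable def csqrt (z : ℂ) : ℂ := z ^ (1 / 2 : ℂ)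

/-- The function `φ(z)`, defined using principal branches. -/
noncomputable def phiFun (c : ℝ) (z : ℂ) : ℂ :=
  z * Complex.log ((csqrt ((bconst c : ℂ) * z - 1) + csqrt ((aconst c : ℂ) * z - 1)) /
      (csqrt ((bconst c : ℂ) * z - 1) - csqrt ((aconst c : ℂ) * z - 1))) -
  Complex.log ((csqrt (z - (aconst c : ℂ)) + csqrt (z - (bconst c : ℂ))) /
      (csqrt (z - (aconst c : ℂ)) - csqrt (z - (bconst c : ℂ))))

/-- The function `φ̃(z)`, defined using principal branches. -/
noncomputable def phiTilde (c : ℝ) (z : ℂ) : ℂ :=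
  z * Complex.log ((csqrt (1 - (aconst c : ℂ) * z) + csqrt (1 - (bconst c : ℂ) * z)) /
      (csqrt (1 - (aconst c : ℂ) * z) - csqrt (1 - (bconst c : ℂ) * z))) -
  Complex.log ((csqrt ((bconst c : ℂ) - z) + csqrt ((aconst c : ℂ) - z)) /
      (csqrt ((bconst c : ℂ) - z) - csqrt ((aconst c : ℂ) - z)))

/-- The domain `ℂ ∖ (−∞, b]` of `φ`. -/
def phiDom (c : ℝ) : Set ℂ := {z : ℂ | ¬(z.im = 0 ∧ z.re ≤ bconst c)}

/-- The domain `ℂ ∖ ((−∞, 0] ∪ [a, ∞))` of `φ̃`. -/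
def phiTildeDom (c : ℝ) : Set ℂ := {z : ℂ | ¬(z.im = 0 ∧ (z.re ≤ 0 ∨ aconst c ≤ z.re))}

/-- The function `φ′(z) = Log[(√(bz−1)+√(az−1))/(√(bz−1)−√(az−1))]`. -/
noncomputable def phiDeriv (c : ℝ) (z : ℂ) : ℂ :=
  Complex.log ((csqrt ((bconst c : ℂ) * z - 1) + csqrt ((aconst c : ℂ) * z - 1)) /
      (csqrt ((bconst c : ℂ) * z - 1) - csqrt ((aconst c : ℂ) * z - 1)))

lemma csqrt_sq (w : ℂ) : csqrt w ^ 2 = w := by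
  unfold csqrt
  rw [← Complex.cpow_nat_mul]
  norm_num

lemma csqrt_ne_zero {w : ℂ} (hw : w ≠ 0) : csqrt w ≠ 0 := by
  intro h
  have := csqrt_sq w
  rw [h] at this
  exact hw (by simpa using this.symm)

lemma csqrt_ofReal_mul {t : ℝ} (ht : 0 < t) {w : ℂ} (hw : w ≠ 0) :
    csqrt (t * w) = csqrt t * csqrt w := by
  have ht' : (t : ℂ) ≠ 0 := by exact_mod_cast ht.ne'
  unfold csqrt
  rw [Complex.cpow_def_of_ne_zero (mul_ne_zero ht' hw), Complex.cpow_def_of_ne_zero ht',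
    Complex.cpow_def_of_ne_zero hw, Complex.log_ofReal_mul ht hw, ← Complex.exp_add,
    Complex.ofReal_log ht.le]
  ring_nf

lemma csqrt_one : csqrt 1 = 1 := by simp [csqrt]

lemma csqrt_zero : csqrt 0 = 0 := by simp [csqrt]

lemma hasDerivAt_csqrt {w : ℂ} (hw : w ∈ slitPlane) :
    HasDerivAt csqrt (1 / (2 * csqrt w)) w := by
  have hw0 := slitPlane_ne_zero hw
  have h := (hasDerivAt_id w).cpow_const (c := (1 / 2 : ℂ)) hw
  have hs := csqrt_ne_zero hw0
  have e : (1 / 2 : ℂ) * id w ^ ((1 / 2 : ℂ) - 1) * 1 = 1 / (2 * csqrt w) := by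
    rw [id, Complex.cpow_sub _ _ hw0, Complex.cpow_one]
    change (1 / 2 : ℂ) * (csqrt w / w) * 1 = _
    nth_rewrite 2 [← csqrt_sq w]
    field_simp
  rw [e] at h
  exact h

lemma continuousAt_csqrt_zero : ContinuousAt csqrt 0 :=
  Complex.continuousAt_cpow_const_of_re_pos (by simp) (by norm_num)

/-- Writing the quotient as `-u` with `u ≥ 0` gives `√α (1 + u) = -√β (1 - u)`; squaring contradicts
the hypothesis. -/
lemma quot_mem_slitPlane {α β : ℂ} (hne : α ≠ β)
    (h : ∀ u : ℝ, 0 ≤ u → α * (1 + u) ^ 2 ≠ β * (1 - u) ^ 2) :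
    (csqrt α + csqrt β) / (csqrt α - csqrt β) ∈ slitPlane := by
  have hd : csqrt α - csqrt β ≠ 0 := by
    intro h0
    apply hne
    rw [← csqrt_sq α, ← csqrt_sq β, sub_eq_zero.mp h0]
  by_contra hmem
  rw [Complex.mem_slitPlane_iff, not_or, not_lt, not_not] at hmem
  obtain ⟨hre, him⟩ := hmem
  set Q := (csqrt α + csqrt β) / (csqrt α - csqrt β) with hQ
  have hQe : Q = ((Q.re : ℝ) : ℂ) := Complex.ext (by simp) (by simpa using him)
  have e1 : csqrt α + csqrt β = Q.re * (csqrt α - csqrt β) := by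
    rw [← hQe, hQ, div_mul_cancel₀ _ hd]
  refine h (-Q.re) (by linarith) ?_
  have e2 : csqrt α * (1 + ((-Q.re : ℝ) : ℂ)) = - (csqrt β * (1 - ((-Q.re : ℝ) : ℂ))) := by
    push_cast
    linear_combination e1
  calc _ = (csqrt α * (1 + ((-Q.re : ℝ) : ℂ))) ^ 2 := by rw [mul_pow, csqrt_sq]
    _ = _ := by rw [e2, neg_sq, mul_pow, csqrt_sq]

/-- Let `α`, `β` have derivatives `α'`, `β'` at `z`, with distinct values off the branch cut that keep
`(√α + √β) / (√α - √β)` off the cut as well by `quot_mem_slitPlane`. Then the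
logarithm of this quotient has derivative `(α β' - β α') / ((α - β) √α √β)`. -/
lemma hasDerivAt_log_quot {α β : ℂ → ℂ} {α' β' z : ℂ} (hα : HasDerivAt α α' z)
    (hβ : HasDerivAt β β' z) (hαs : α z ∈ slitPlane) (hβs : β z ∈ slitPlane)
    (hne : α z ≠ β z)
    (h : ∀ u : ℝ, 0 ≤ u → α z * (1 + u) ^ 2 ≠ β z * (1 - u) ^ 2) :
    HasDerivAt (fun z => Complex.log ((csqrt (α z) + csqrt (β z)) /
        (csqrt (α z) - csqrt (β z))))
      ((α z * β' - β z * α') / ((α z - β z) * (csqrt (α z) * csqrt (β z)))) z := by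
  have hp := (hasDerivAt_csqrt hαs).comp z hα
  have hq := (hasDerivAt_csqrt hβs).comp z hβ
  have hp0 := csqrt_ne_zero (slitPlane_ne_zero hαs)
  have hq0 := csqrt_ne_zero (slitPlane_ne_zero hβs)
  have hmem := quot_mem_slitPlane hne h
  have hpp := csqrt_sq (α z)
  have hqq := csqrt_sq (β z)
  have hsub : csqrt (α z) - csqrt (β z) ≠ 0 := by
    intro h0
    exact hne (by rw [← hpp, ← hqq, sub_eq_zero.mp h0])
  have hadd : csqrt (α z) + csqrt (β z) ≠ 0 := by
    intro h0
    exact hne (by rw [← hpp, ← hqq, eq_neg_of_add_eq_zero_left h0, neg_sq])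
  have key := ((hp.add hq).div (hp.sub hq) hsub).clog hmem
  refine key.congr_deriv ?_
  simp only [Pi.add_apply, Pi.sub_apply, Pi.div_apply, Function.comp_apply]
  have hfac : α z - β z = (csqrt (α z) + csqrt (β z)) * (csqrt (α z) - csqrt (β z)) := by
    linear_combination -hpp + hqq
  rw [hfac]
  generalize csqrt (α z) = p at *
  generalize csqrt (β z) = q at *
  rw [← hpp, ← hqq]
  field_simp
  ring

lemma aconst_pos {c : ℝ} (hc0 : 0 < c) (hc1 : c < 1) : 0 < aconst c := by
  have h1 : Real.sqrt c < 1 := by rw [Real.sqrt_lt' one_pos]; simpa using hc1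
  have h0 : 0 < Real.sqrt c := Real.sqrt_pos.mpr hc0
  exact div_pos (by linarith) (by linarith)

lemma one_lt_bconst {c : ℝ} (hc0 : 0 < c) (hc1 : c < 1) : 1 < bconst c := by
  have h1 : Real.sqrt c < 1 := by rw [Real.sqrt_lt' one_pos]; simpa using hc1
  have h0 : 0 < Real.sqrt c := Real.sqrt_pos.mpr hc0
  rw [bconst, one_lt_div (by linarith)]
  linarith

lemma aconst_mul_bconst {c : ℝ} (hc0 : 0 < c) (hc1 : c < 1) : aconst c * bconst c = 1 := by
  have h1 : Real.sqrt c < 1 := by rw [Real.sqrt_lt' one_pos]; simpa using hc1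
  have h0 : 0 < Real.sqrt c := Real.sqrt_pos.mpr hc0
  have h2 : 1 - Real.sqrt c ≠ 0 := by linarith
  have h3 : 1 + Real.sqrt c ≠ 0 := by linarith
  rw [aconst, bconst]
  field_simp

lemma isOpen_phiDom (c : ℝ) : IsOpen (phiDom c) := by
  have : phiDom c = (fun z : ℂ => z - bconst c) ⁻¹' slitPlane := by
    ext z
    simp only [phiDom, Set.mem_ofPred_eq, Set.mem_preimage, Complex.mem_slitPlane_iff,
      Complex.sub_re, Complex.sub_im, Complex.ofReal_re, Complex.ofReal_im, sub_zero, sub_pos]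
    rw [not_and_or, not_le, or_comm]
  rw [this]
  exact Complex.isOpen_slitPlane.preimage (by fun_prop)

/-- A solution of a real linear equation `z m = n` with `0 < m` and `n ≤ B m` is real and at most
`B`. -/
lemma real_le_of_mul_eq {z : ℂ} {m n B : ℝ} (hm : 0 < m) (h : z * m = n) (hn : n ≤ B * m) :
    z.im = 0 ∧ z.re ≤ B := by
  have hr := congrArg Complex.re h
  have hi := congrArg Complex.im h
  simp at hr hi
  refine ⟨hi.resolve_right hm.ne', ?_⟩
  rw [← hr] at hn
  exact le_of_mul_le_mul_right hn hm

lemma mul_sub_mem_slitPlane {z : ℂ} {B r s : ℝ} (hz : ¬(z.im = 0 ∧ z.re ≤ B)) (hr : 0 < r)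
    (hs : s ≤ r * B) : (r : ℂ) * z - s ∈ slitPlane := by
  rw [Complex.mem_slitPlane_iff]
  by_contra hcon
  rw [not_or, not_lt, not_not] at hcon
  simp at hcon
  obtain ⟨h1, h2⟩ := hcon
  refine hz ⟨h2.resolve_left hr.ne', ?_⟩
  exact le_of_mul_le_mul_left (h1.trans hs) hr

lemma phiFun_hasDerivAt {c : ℝ} (hc0 : 0 < c) (hc1 : c < 1) {z : ℂ} (hz : z ∈ phiDom c) :
    HasDerivAt (phiFun c) (phiDeriv c z) z := by
  have ha := aconst_pos hc0 hc1
  have hb := one_lt_bconst hc0 hc1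
  have hab := aconst_mul_bconst hc0 hc1
  unfold phiFun phiDeriv
  have hz' : ¬(z.im = 0 ∧ z.re ≤ bconst c) := hz
  generalize aconst c = a at *
  generalize bconst c = b at *
  have hab1 : a < 1 := by nlinarith
  have habC : (a : ℂ) * b = 1 := by exact_mod_cast hab
  have hz0 : z ≠ 0 := by
    rintro rfl
    exact hz' ⟨rfl, by simp; linarith⟩
  have hba : (b : ℂ) - a ≠ 0 := by
    have : b - a ≠ 0 := by linarith
    exact_mod_cast this
  have s1 : (b : ℂ) * z - 1 ∈ slitPlane := by
    simpa using mul_sub_mem_slitPlane (s := 1) hz' (by linarith : 0 < b) (by nlinarith)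
  have s2 : (a : ℂ) * z - 1 ∈ slitPlane := by
    simpa using mul_sub_mem_slitPlane (s := 1) hz' ha (by nlinarith)
  have s3 : z - a ∈ slitPlane := by
    simpa using mul_sub_mem_slitPlane (s := a) hz' one_pos (by linarith)
  have s4 : z - b ∈ slitPlane := by
    simpa using mul_sub_mem_slitPlane (s := b) hz' one_pos (by linarith)
  have n1 : (b : ℂ) * z - 1 ≠ a * z - 1 := by
    intro h
    exact mul_ne_zero hba hz0 (by linear_combination h)
  have n2 : z - (a : ℂ) ≠ z - b := by
    intro h
    exact hba (by linear_combination h)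
  have d1 : HasDerivAt (fun z : ℂ => (b : ℂ) * z - 1) b z := by
    simpa using ((hasDerivAt_id z).const_mul (b : ℂ)).sub_const 1
  have d2 : HasDerivAt (fun z : ℂ => (a : ℂ) * z - 1) a z := by
    simpa using ((hasDerivAt_id z).const_mul (a : ℂ)).sub_const 1
  have d3 : HasDerivAt (fun z : ℂ => z - (a : ℂ)) 1 z := (hasDerivAt_id z).sub_const _
  have d4 : HasDerivAt (fun z : ℂ => z - (b : ℂ)) 1 z := (hasDerivAt_id z).sub_const _
  have L1 := hasDerivAt_log_quot d1 d2 s1 s2 n1 (by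
    intro u hu h
    refine hz' (real_le_of_mul_eq (m := b * (1 + u) ^ 2 - a * (1 - u) ^ 2) (n := 4 * u) ?_ ?_ ?_)
    · nlinarith [mul_nonneg ha.le hu, sq_nonneg (1 - u), sq_nonneg (1 + u), mul_nonneg hu hu]
    · push_cast
      linear_combination h
    · have : b * (b * (1 + u) ^ 2 - a * (1 - u) ^ 2) = b ^ 2 * (1 + u) ^ 2 - (1 - u) ^ 2 := by
        linear_combination -(1 - u) ^ 2 * hab
      -- the bound is now `4u ≤ b² (1 + u)² - (1 - u)²`, true since `b² ≥ 1`
      rw [this]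
      have hb2 : 1 ≤ b ^ 2 := by nlinarith
      nlinarith [mul_nonneg (sub_nonneg.mpr hb2) (sq_nonneg (1 + u))])
  have L2 := hasDerivAt_log_quot d3 d4 s3 s4 n2 (by
    intro u hu h
    rcases hu.eq_or_lt with rfl | hu
    · exact n2 (by simpa using h)
    refine hz' (real_le_of_mul_eq (m := 4 * u) (n := a * (1 + u) ^ 2 - b * (1 - u) ^ 2) ?_ ?_ ?_)
    · linarith
    · push_cast
      linear_combination h
    · nlinarith [mul_nonneg (sub_nonneg.mpr (hab1.trans hb).le) (sq_nonneg (1 + u))])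
  refine (((hasDerivAt_id z).mul L1).sub L2).congr_deriv ?_
  have hpq : csqrt (b * z - 1) * csqrt (a * z - 1) = csqrt (z - a) * csqrt (z - b) := by
    have hsab : csqrt b * csqrt a = 1 := by
      have := csqrt_ofReal_mul (zero_lt_one.trans hb) (w := (a : ℂ)) (by exact_mod_cast ha.ne')
      rw [← this, mul_comm, habC, csqrt_one]
    have e1 : (b : ℂ) * z - 1 = b * (z - a) := by linear_combination habC
    have e2 : (a : ℂ) * z - 1 = a * (z - b) := by linear_combination habC
    rw [e1, e2, csqrt_ofReal_mul (zero_lt_one.trans hb) (slitPlane_ne_zero s3),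
      csqrt_ofReal_mul ha (slitPlane_ne_zero s4)]
    linear_combination csqrt (z - a) * csqrt (z - b) * hsab
  have hR : csqrt (z - a) * csqrt (z - b) ≠ 0 :=
    mul_ne_zero (csqrt_ne_zero (slitPlane_ne_zero s3)) (csqrt_ne_zero (slitPlane_ne_zero s4))
  rw [hpq]
  generalize csqrt (z - a) * csqrt (z - b) = R at *
  have f1 : (b * z - 1) * (a : ℂ) - (a * z - 1) * b = b - a := by ring
  have f2 : (b : ℂ) * z - 1 - (a * z - 1) = (b - a) * z := by ring
  have f3 : (z - (a : ℂ)) * 1 - (z - b) * 1 = b - a := by ring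
  have f4 : z - (a : ℂ) - (z - b) = b - a := by ring
  simp only [f1, f2, f3, f4, id]
  field_simp
  ring

/-- For `α`, `β` continuous at `z₀` with `α z₀ ∈ ℂ ∖ (-∞, 0]` and `β z₀ = 0`, the logarithm of `(√α + √β) / (√α - √β)` tends to
`log 1 = 0` at `z₀`. -/
lemma tendsto_log_quot {α β : ℂ → ℂ} {z₀ : ℂ} (hα : ContinuousAt α z₀) (hβ : ContinuousAt β z₀)
    (hαs : α z₀ ∈ slitPlane) (hβ0 : β z₀ = 0) :
    Tendsto (fun z => Complex.log ((csqrt (α z) + csqrt (β z)) /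
        (csqrt (α z) - csqrt (β z)))) (𝓝 z₀) (𝓝 0) := by
  have hp : Tendsto (fun z => csqrt (α z)) (𝓝 z₀) (𝓝 (csqrt (α z₀))) :=
    (hasDerivAt_csqrt hαs).continuousAt.tendsto.comp hα
  have hq : Tendsto (fun z => csqrt (β z)) (𝓝 z₀) (𝓝 0) := by
    have h0 : Tendsto csqrt (𝓝 0) (𝓝 0) := by
      simpa [ContinuousAt, csqrt_zero] using continuousAt_csqrt_zero
    exact h0.comp (hβ0 ▸ hβ.tendsto)
  have hp0 := csqrt_ne_zero (slitPlane_ne_zero hαs)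
  have h := (hp.add hq).div (hp.sub hq) (by simpa using hp0)
  rw [add_zero, sub_zero, div_self hp0] at h
  simpa using h.clog (by simp)

/-- `φ` is analytic on `ℂ∖(−∞,b]` with derivative `φ′`, and `φ(z) → 0` as `z → b`
within the domain. -/
theorem phiFun_analytic_deriv_limit (c : ℝ) (hc0 : 0 < c) (hc1 : c < 1) :
    (∀ z ∈ phiDom c, AnalyticAt ℂ (phiFun c) z ∧ HasDerivAt (phiFun c) (phiDeriv c z) z) ∧
    Tendsto (phiFun c) (𝓝[phiDom c] (bconst c : ℂ)) (𝓝 0) := by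
  refine ⟨fun z hz => ⟨?_, phiFun_hasDerivAt hc0 hc1 hz⟩, ?_⟩
  · rw [Complex.analyticAt_iff_eventually_differentiableAt]
    filter_upwards [(isOpen_phiDom c).mem_nhds hz] with w hw
    exact (phiFun_hasDerivAt hc0 hc1 hw).differentiableAt
  · have ha := aconst_pos hc0 hc1
    have hb := one_lt_bconst hc0 hc1
    have hab := aconst_mul_bconst hc0 hc1
    have habC : (aconst c : ℂ) * bconst c = 1 := by exact_mod_cast hab
    have s1 : (bconst c : ℂ) * bconst c - 1 ∈ slitPlane := by
      have : 0 < bconst c * bconst c - 1 := by nlinarith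
      exact_mod_cast Complex.ofReal_mem_slitPlane.mpr this
    have s2 : (bconst c : ℂ) - aconst c ∈ slitPlane := by
      have : 0 < bconst c - aconst c := by nlinarith
      exact_mod_cast Complex.ofReal_mem_slitPlane.mpr this
    have T1 := tendsto_log_quot (α := fun z => (bconst c : ℂ) * z - 1)
      (β := fun z => (aconst c : ℂ) * z - 1) (z₀ := (bconst c : ℂ))
      (by fun_prop) (by fun_prop) s1 (by simp [habC])
    have T2 := tendsto_log_quot (α := fun z => z - (aconst c : ℂ))
      (β := fun z => z - (bconst c : ℂ)) (z₀ := (bconst c : ℂ))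
      (by fun_prop) (by fun_prop) s2 (by simp)
    have T := ((tendsto_id (x := 𝓝 (bconst c : ℂ))).mul T1).sub T2
    rw [mul_zero, sub_zero] at T
    exact T.mono_left nhdsWithin_le_nhds
end

section
/- The matrix-valued function N is analytic on ℂ∖[a,b], and for every x ∈ (a,b) with x ≠ 1 the boundary values N₊(x) := lim_{ε→0⁺} N(x+iε) and N₋(x) := lim_{ε→0⁺} N(x−iε) exist and satisfy the jump relation N₊(x) = N₋(x) · [[0, −|x−1|^{β−1}], [|x−1|^{1−β}, 0]]. -/
/-! Every entry of `N` is a constant times `w₁ ^ s * ((√w₂ ± √w₃) / 2) ^ r / (w₂ ^ (1/4) * w₃ ^ (1/4))`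
with `w₁ = z - 1`, `w₂ = z - a`, `w₃ = z - b` (`entry`, `Nmat_eq`).

*Analyticity.* As `(√w₂ + √w₃) (√w₂ - √w₃) = b - a > 0`, both combinations lie in the right
half-plane as soon as `w₂, w₃` avoid the cut, so an entry is analytic away from `(-∞, b]`
(`analyticAt_entry`). On `Re z < a`, replacing each `wᵢ` by `-wᵢ` produces a phase
`exp (± i π (s ± r / 2 - 1 / 2))`, and the exponents of `N` satisfy `s ± r / 2 = ± 1 / 2`, so the
phase is `± 1` and does not depend on the half-plane. There the entry thus coincides with an
expression having no cut (`entry_eq_of_re_lt`).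

*Jump.* The same phases give the boundary values on `(a, b)` (`tendsto_entry`). Crossing the cut
exchanges `√(x - a) + i √(b - x)` with its conjugate, turns `exp (-i π / 4)` into
`exp (i π / 4) = i exp (-i π / 4)`; and `(x - 1) ^ s` from above is `|x - 1| ^ (2 s)` times
`(x - 1) ^ (-s)` from below (`bdryPow_eq`). So each entry from above is a multiple of its row neighbour from
below (`entryBdry_jump`).
-/

open Complex Finset Filter Topology

/-- The matrix `N(z)`, defined using principal branches of all complex powers. -/
noncomputable def Nmat (β c : ℝ) (z : ℂ) : Matrix (Fin 2) (Fin 2) ℂ :=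
  !![(z - 1) ^ ((((1 - β) / 2 : ℝ)) : ℂ) *
        ((csqrt (z - (aconst c : ℂ)) + csqrt (z - (bconst c : ℂ))) / 2) ^ (β : ℂ) /
        ((z - (aconst c : ℂ)) ^ (1 / 4 : ℂ) * (z - (bconst c : ℂ)) ^ (1 / 4 : ℂ)),
      -Complex.I * (z - 1) ^ ((((β - 1) / 2 : ℝ)) : ℂ) *
        ((csqrt (z - (aconst c : ℂ)) - csqrt (z - (bconst c : ℂ))) / 2) ^ (β : ℂ) /
        ((z - (aconst c : ℂ)) ^ (1 / 4 : ℂ) * (z - (bconst c : ℂ)) ^ (1 / 4 : ℂ));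
      Complex.I * (z - 1) ^ ((((1 - β) / 2 : ℝ)) : ℂ) *
        ((csqrt (z - (aconst c : ℂ)) - csqrt (z - (bconst c : ℂ))) / 2) ^ (((2 - β : ℝ)) : ℂ) /
        ((z - (aconst c : ℂ)) ^ (1 / 4 : ℂ) * (z - (bconst c : ℂ)) ^ (1 / 4 : ℂ)),
      (z - 1) ^ ((((β - 1) / 2 : ℝ)) : ℂ) *
        ((csqrt (z - (aconst c : ℂ)) + csqrt (z - (bconst c : ℂ))) / 2) ^ (((2 - β : ℝ)) : ℂ) /
        ((z - (aconst c : ℂ)) ^ (1 / 4 : ℂ) * (z - (bconst c : ℂ)) ^ (1 / 4 : ℂ))]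

/-- The domain `ℂ ∖ [a,b]` of `N`. -/
def Ndom (c : ℝ) : Set ℂ := {z : ℂ | ¬(z.im = 0 ∧ aconst c ≤ z.re ∧ z.re ≤ bconst c)}

/-- The scalar building block of `N`: with `w₁ = z - 1`, `w₂ = z - a`, `w₃ = z - b` and `σ = ±1`,
every entry of `N(z)` is a constant times some `entry s r σ w₁ w₂ w₃`. -/
noncomputable def entry (s r σ w₁ w₂ w₃ : ℂ) : ℂ :=
  w₁ ^ s * ((csqrt w₂ + σ * csqrt w₃) / 2) ^ r / (w₂ ^ (1 / 4 : ℂ) * w₃ ^ (1 / 4 : ℂ))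

/-- The boundary value of `w ^ s` at the real point `y ≠ 0`, from above if `τ = 1` and from below
if `τ = -1`. -/
noncomputable def bdryPow (τ y : ℝ) (s : ℂ) : ℂ :=
  if y < 0 then exp (τ * Real.pi * I * s) * ((-y : ℝ) : ℂ) ^ s else (y : ℂ) ^ s

/-! ### Principal powers and square roots -/

/-- Passing from `w` to `-w` shifts the principal argument by `τ π`, hence multiplies a principal
power by a phase. -/
lemma cpow_eq_phase_mul_neg_cpow {w s : ℂ} {τ : ℝ} (hw : w ≠ 0)
    (h : arg (-w) = arg w - τ * Real.pi) :
    w ^ s = exp (τ * Real.pi * I * s) * (-w) ^ s := by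
  rw [cpow_def_of_ne_zero hw, cpow_def_of_ne_zero (neg_ne_zero.2 hw), ← Complex.exp_add]
  congr 1
  have : log (-w) = log w - τ * Real.pi * I := by
    simp only [log, norm_neg, h]
    push_cast
    ring
  rw [this]
  ring

lemma exp_half_pi_mul {τ : ℝ} (hτ : τ = 1 ∨ τ = -1) :
    exp (τ * Real.pi * I * (1 / 2)) = τ * I := by
  rcases hτ with rfl | rfl
  · rw [show ((1 : ℝ) : ℂ) * Real.pi * I * (1 / 2) = Real.pi / 2 * I by push_cast; ring,
      exp_pi_div_two_mul_I]
    simp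
  · rw [show ((-1 : ℝ) : ℂ) * Real.pi * I * (1 / 2) = -Real.pi / 2 * I by push_cast; ring,
      exp_neg_pi_div_two_mul_I]
    simp

/-- Rotating a point of the right half-plane by a quarter turn does not cross the branch cut. -/
lemma quarter_turn_cpow {X r : ℂ} {τ : ℝ} (hτ : τ = 1 ∨ τ = -1) (hX : 0 < X.re) :
    (τ * I * X) ^ r = exp (τ * Real.pi * I * (1 / 2) * r) * X ^ r := by
  have hX0 : X ≠ 0 := by rintro rfl; simp at hX
  have hτ0 : (τ : ℂ) ≠ 0 := by rcases hτ with rfl | rfl <;> simp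
  have harg := abs_lt.1 ((abs_arg_lt_pi_div_two_iff (z := X)).2 (Or.inl hX))
  have hlog : log (τ * I * X) = log X + τ * Real.pi * I * (1 / 2) := by
    have him : (log X + τ * Real.pi * I * (1 / 2)).im = arg X + τ * Real.pi / 2 := by
      have : log X + τ * Real.pi * I * (1 / 2) = log X + ((τ * Real.pi / 2 : ℝ) : ℂ) * I := by
        push_cast; ring
      rw [this]
      simp [log_im]
    rw [← log_exp (x := log X + τ * Real.pi * I * (1 / 2)), Complex.exp_add, exp_log hX0,
      exp_half_pi_mul hτ, mul_comm]
    · rw [him]; rcases hτ with rfl | rfl <;> linarith [Real.pi_pos]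
    · rw [him]; rcases hτ with rfl | rfl <;> linarith [Real.pi_pos]
  rw [cpow_def_of_ne_zero (by simp [hτ0, hX0]), cpow_def_of_ne_zero hX0, ← Complex.exp_add, hlog]
  congr 1
  ring

lemma csqrt_re_pos {w : ℂ} (hw : w ∈ slitPlane) : 0 < (csqrt w).re := by
  have h0 := slitPlane_ne_zero hw
  obtain ⟨h1, h2⟩ := mem_slitPlane_iff_arg.1 hw
  have h3 := neg_pi_lt_arg w
  have h4 := lt_of_le_of_ne (arg_le_pi w) h1
  have him : (log w * (1 / 2)).im = arg w / 2 := by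
    rw [show log w * (1 / 2) = ((1 / 2 : ℝ) : ℂ) * log w by push_cast; ring, im_ofReal_mul, log_im]
    ring
  rw [csqrt, cpow_def_of_ne_zero h0, exp_re, him]
  exact mul_pos (Real.exp_pos _) (Real.cos_pos_of_mem_Ioo ⟨by linarith, by linarith⟩)

lemma csqrt_ofReal {y : ℝ} (hy : 0 ≤ y) : csqrt (y : ℂ) = (Real.sqrt y : ℂ) := by
  rw [csqrt, Real.sqrt_eq_rpow, ofReal_cpow hy]
  norm_num

lemma re_pos_of_mul_eq {X Y : ℂ} {d : ℝ} (hd : 0 < d) (hX : 0 < X.re) (h : X * Y = d) :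
    0 < Y.re := by
  have h1 : Y = d * X⁻¹ := by
    have hX0 : X ≠ 0 := by rintro rfl; simp at hX
    field_simp
    linear_combination h
  rw [h1, re_ofReal_mul, inv_re]
  have : 0 < normSq X := normSq_pos.2 (by rintro rfl; simp at hX)
  positivity

/-- If `w₂ - w₃ > 0`, both `√w₂ ± √w₃` lie in the right half-plane: the sum trivially, and the
difference because its product with the sum is `w₂ - w₃`. -/
lemma csqrt_comb_re_pos {w₂ w₃ σ : ℂ} {d : ℝ} (hσ : σ = 1 ∨ σ = -1) (hd : 0 < d)
    (h2 : w₂ ∈ slitPlane) (h3 : w₃ ∈ slitPlane) (h : w₂ - w₃ = d) :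
    0 < ((csqrt w₂ + σ * csqrt w₃) / 2).re := by
  have hs : 0 < ((csqrt w₂ + csqrt w₃) / 2).re := by
    have := csqrt_re_pos h2
    have := csqrt_re_pos h3
    rw [div_ofNat_re, add_re]
    positivity
  rcases hσ with rfl | rfl
  · simpa using hs
  · refine re_pos_of_mul_eq (d := d / 4) (by positivity) hs ?_
    push_cast
    linear_combination (csqrt_sq w₂ - csqrt_sq w₃ + h) / 4

/-! ### Analyticity -/

lemma analyticAt_entry {s r σ z : ℂ} {f₁ f₂ f₃ : ℂ → ℂ} {d : ℝ} (hσ : σ = 1 ∨ σ = -1) (hd : 0 < d)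
    (hf₁ : AnalyticAt ℂ f₁ z) (hf₂ : AnalyticAt ℂ f₂ z) (hf₃ : AnalyticAt ℂ f₃ z)
    (h1 : f₁ z ∈ slitPlane) (h2 : f₂ z ∈ slitPlane) (h3 : f₃ z ∈ slitPlane)
    (h : f₂ z - f₃ z = d) :
    AnalyticAt ℂ (fun w => entry s r σ (f₁ w) (f₂ w) (f₃ w)) z := by
  have hpos := csqrt_comb_re_pos hσ hd h2 h3 h
  have hX : AnalyticAt ℂ (fun w => (csqrt (f₂ w) + σ * csqrt (f₃ w)) / 2) z := by
    unfold csqrt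
    exact ((hf₂.cpow analyticAt_const h2).add
      (analyticAt_const.mul (hf₃.cpow analyticAt_const h3))).div_const
  unfold entry
  refine ((hf₁.cpow analyticAt_const h1).mul (hX.cpow analyticAt_const (Or.inl hpos))).div
    ((hf₂.cpow analyticAt_const h2).mul (hf₃.cpow analyticAt_const h3)) ?_
  have hn2 := slitPlane_ne_zero h2
  have hn3 := slitPlane_ne_zero h3
  simp [cpow_eq_zero_iff, hn2, hn3]

/-- Rewriting an entry in terms of `-w₁, -w₃, -w₂`: the phases of the individual factors add up
to a single phase. -/
lemma entry_eq_phase_mul {s r σ w₁ w₂ w₃ : ℂ} {τ d : ℝ} (hτ : τ = 1 ∨ τ = -1)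
    (hσ : σ = 1 ∨ σ = -1) (hd : 0 < d) (h : w₂ - w₃ = d)
    (h1 : -w₁ ∈ slitPlane) (h2 : -w₂ ∈ slitPlane) (h3 : -w₃ ∈ slitPlane)
    (a1 : arg (-w₁) = arg w₁ - τ * Real.pi) (a2 : arg (-w₂) = arg w₂ - τ * Real.pi)
    (a3 : arg (-w₃) = arg w₃ - τ * Real.pi) :
    entry s r σ w₁ w₂ w₃ =
      exp (τ * Real.pi * I * (s + σ * r / 2 - 1 / 2)) * entry s r σ (-w₁) (-w₃) (-w₂) := by
  have n1 : w₁ ≠ 0 := neg_ne_zero.1 (slitPlane_ne_zero h1)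
  have n2 : w₂ ≠ 0 := neg_ne_zero.1 (slitPlane_ne_zero h2)
  have n3 : w₃ ≠ 0 := neg_ne_zero.1 (slitPlane_ne_zero h3)
  have hpos := csqrt_comb_re_pos hσ hd h3 h2 (by linear_combination h)
  have c2 : csqrt w₂ = τ * I * csqrt (-w₂) := by
    rw [csqrt, cpow_eq_phase_mul_neg_cpow n2 a2, exp_half_pi_mul hτ, csqrt]
  have c3 : csqrt w₃ = τ * I * csqrt (-w₃) := by
    rw [csqrt, cpow_eq_phase_mul_neg_cpow n3 a3, exp_half_pi_mul hτ, csqrt]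
  have hcomb : ((csqrt w₂ + σ * csqrt w₃) / 2) ^ r = exp (τ * Real.pi * I * (1 / 2) * (σ * r)) *
      ((csqrt (-w₃) + σ * csqrt (-w₂)) / 2) ^ r := by
    rw [c2, c3]
    rcases hσ with rfl | rfl
    · rw [show (τ * I * csqrt (-w₂) + 1 * (τ * I * csqrt (-w₃))) / 2 =
        τ * I * ((csqrt (-w₃) + 1 * csqrt (-w₂)) / 2) by ring, quarter_turn_cpow hτ hpos,
        one_mul r]
    · -- the difference changes sign, so the quarter turn goes the other way
      rw [show (τ * I * csqrt (-w₂) + -1 * (τ * I * csqrt (-w₃))) / 2 =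
        (-τ : ℝ) * I * ((csqrt (-w₃) + -1 * csqrt (-w₂)) / 2) by push_cast; ring,
        quarter_turn_cpow (by rcases hτ with rfl | rfl <;> simp) hpos]
      congr 2
      push_cast
      ring
  rw [entry, entry, hcomb, cpow_eq_phase_mul_neg_cpow n1 a1, cpow_eq_phase_mul_neg_cpow n2 a2,
    cpow_eq_phase_mul_neg_cpow n3 a3]
  have e : exp (τ * Real.pi * I * (s + σ * r / 2 - 1 / 2)) =
      exp (τ * Real.pi * I * s) * exp (τ * Real.pi * I * (1 / 2) * (σ * r)) /
        (exp (τ * Real.pi * I * (1 / 4)) * exp (τ * Real.pi * I * (1 / 4))) := by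
    rw [← Complex.exp_add, ← Complex.exp_add, ← Complex.exp_sub]
    congr 1
    ring
  rw [e]
  ring

/-- For `Re z` to the left of `p, q, 1`, an entry equals a fixed sign times an expression with no
cut there, provided the exponents satisfy the balance relation `s + σ r / 2 = σ / 2`. -/
lemma entry_eq_of_re_lt {s r σ z : ℂ} {p q : ℝ} (hσ : σ = 1 ∨ σ = -1)
    (hsr : s + σ * r / 2 = σ / 2) (hpq : p < q) (hp1 : p < 1) (hz : z.re < p) :
    entry s r σ (z - 1) (z - p) (z - q) = σ * entry s r σ (1 - z) (q - z) (p - z) := by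
  have key : ∀ τ : ℝ, (τ = 1 ∨ τ = -1) →
      (∀ y : ℝ, z.re < y → arg (-(z - y)) = arg (z - y) - τ * Real.pi) →
      entry s r σ (z - 1) (z - p) (z - q) = σ * entry s r σ (1 - z) (q - z) (p - z) := by
    intro τ hτ H
    have hs : ∀ y : ℝ, z.re < y → -(z - y) ∈ slitPlane := fun y hy => Or.inl (by simpa using hy)
    rw [entry_eq_phase_mul hτ hσ (sub_pos.2 hpq) (by push_cast; ring)
      (by simpa using hs 1 (by linarith)) (hs p hz) (hs q (by linarith))
      (by simpa using H 1 (by linarith)) (H p hz) (H q (by linarith))]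
    simp only [neg_sub]
    congr 1
    rw [hsr]
    rcases hσ with rfl | rfl
    · simp
    · rw [show (τ : ℂ) * Real.pi * I * (-1 / 2 - 1 / 2) = -(τ * Real.pi * I) by ring]
      rcases hτ with rfl | rfl <;> simp [Complex.exp_neg, exp_pi_mul_I]
  rcases lt_or_ge z.im 0 with him | him
  · refine key (-1) (Or.inr rfl) fun y hy => ?_
    rw [arg_neg_eq_arg_add_pi_iff.2 (Or.inl (by simpa using him))]
    ring
  · refine key 1 (Or.inl rfl) fun y hy => ?_
    rw [one_mul, arg_neg_eq_arg_sub_pi_iff]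
    rcases him.lt_or_eq with h | h
    · exact Or.inl (by simpa using h)
    · exact Or.inr ⟨by simpa using h.symm, by simpa using hy⟩

lemma analyticAt_entry_sub {s r σ z : ℂ} {p q : ℝ} (hσ : σ = 1 ∨ σ = -1)
    (hsr : s + σ * r / 2 = σ / 2) (hp1 : p < 1) (h1q : 1 < q)
    (hz : ¬(z.im = 0 ∧ p ≤ z.re ∧ z.re ≤ q)) :
    AnalyticAt ℂ (fun w => entry s r σ (w - 1) (w - p) (w - q)) z := by
  have hpq : p < q := hp1.trans h1q
  rcases lt_or_ge z.re p with h | h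
  · have hA : AnalyticAt ℂ (fun w => σ * entry s r σ (1 - w) (q - w) (p - w)) z :=
      analyticAt_const.mul (analyticAt_entry hσ (sub_pos.2 hpq) (by fun_prop) (by fun_prop)
        (by fun_prop) (Or.inl (by simp; linarith)) (Or.inl (by simp; linarith))
        (Or.inl (by simp; linarith)) (by push_cast; ring))
    refine hA.congr ?_
    filter_upwards [(isOpen_lt continuous_re continuous_const).mem_nhds h] with w hw
    exact (entry_eq_of_re_lt hσ hsr hpq hp1 hw).symm
  · have hs : ∀ y : ℝ, y ≤ q → z - y ∈ slitPlane := by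
      intro y hy
      by_cases him : z.im = 0
      · have : q < z.re := by
          by_contra hq
          exact hz ⟨him, h, not_lt.1 hq⟩
        exact Or.inl (by simp; linarith)
      · exact Or.inr (by simpa using him)
    exact analyticAt_entry hσ (sub_pos.2 hpq) (by fun_prop) (by fun_prop)
        (by fun_prop) (by simpa using hs 1 h1q.le) (hs p hpq.le) (hs q le_rfl) (by push_cast; ring)

/-! ### Boundary values -/

lemma tendsto_cpow_bdry {y τ : ℝ} (hτ : τ = 1 ∨ τ = -1) (hy : y ≠ 0) (s : ℂ) :
    Tendsto (fun ε : ℝ => ((y : ℂ) + (τ * ε : ℝ) * I) ^ s) (𝓝[>] 0) (𝓝 (bdryPow τ y s)) := by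
  have hl : Tendsto (fun ε : ℝ => (y : ℂ) + (τ * ε : ℝ) * I) (𝓝[>] 0) (𝓝 (y : ℂ)) := by
    have : Continuous fun ε : ℝ => (y : ℂ) + (τ * ε : ℝ) * I := by fun_prop
    exact (this.tendsto' 0 _ (by simp)).mono_left nhdsWithin_le_nhds
  unfold bdryPow
  split_ifs with h
  · have hn : Tendsto (fun ε : ℝ => -((y : ℂ) + (τ * ε : ℝ) * I)) (𝓝[>] 0) (𝓝 ((-y : ℝ) : ℂ)) := by
      simpa using hl.neg
    have hc := (hn.cpow (tendsto_const_nhds (x := s)) (Or.inl (by simpa using h))).const_mul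
      (exp (τ * Real.pi * I * s))
    refine hc.congr' ?_
    filter_upwards [self_mem_nhdsWithin] with ε hε
    have hε : 0 < ε := hε
    refine (cpow_eq_phase_mul_neg_cpow ?_ ?_).symm
    · intro h0
      have := congrArg re h0
      simp at this
      exact hy this
    · rcases hτ with rfl | rfl
      · rw [one_mul Real.pi, arg_neg_eq_arg_sub_pi_iff]
        exact Or.inl (by simpa using hε)
      · rw [arg_neg_eq_arg_add_pi_iff.2 (Or.inl (by simpa using hε))]
        ring
  · exact hl.cpow tendsto_const_nhds (Or.inl (by simpa using lt_of_le_of_ne (not_lt.1 h) hy.symm))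

lemma tendsto_entry {x p q τ : ℝ} {s r σ : ℂ} (hτ : τ = 1 ∨ τ = -1) (hσ : σ = 1 ∨ σ = -1)
    (hp : p < x) (hq : x < q) (hx : x ≠ 1) :
    Tendsto (fun ε : ℝ => entry s r σ ((x : ℂ) + (τ * ε : ℝ) * I - 1)
        ((x : ℂ) + (τ * ε : ℝ) * I - p) ((x : ℂ) + (τ * ε : ℝ) * I - q)) (𝓝[>] 0)
      (𝓝 (bdryPow τ (x - 1) s *
        ((Real.sqrt (x - p) + σ * τ * I * Real.sqrt (q - x)) / 2 : ℂ) ^ r /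
        (((x - p : ℝ) : ℂ) ^ (1 / 4 : ℂ) *
          (exp (τ * Real.pi * I * (1 / 4)) * ((q - x : ℝ) : ℂ) ^ (1 / 4 : ℂ))))) := by
  have H : ∀ y : ℝ, x ≠ y → ∀ t : ℂ, Tendsto (fun ε : ℝ => ((x : ℂ) + (τ * ε : ℝ) * I - y) ^ t)
      (𝓝[>] 0) (𝓝 (bdryPow τ (x - y) t)) := by
    intro y hy t
    refine (tendsto_cpow_bdry hτ (sub_ne_zero.2 hy) t).congr fun ε => ?_
    congr 1
    push_cast
    ring
  have P : ∀ t : ℂ, bdryPow τ (x - p) t = ((x - p : ℝ) : ℂ) ^ t := fun t => by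
    rw [bdryPow, if_neg (by linarith)]
  have Q : ∀ t : ℂ, bdryPow τ (x - q) t =
      exp (τ * Real.pi * I * t) * ((q - x : ℝ) : ℂ) ^ t := fun t => by
    rw [bdryPow, if_pos (by linarith), neg_sub]
  have h1 := H 1 hx s
  have hp2 := H p hp.ne' (1 / 2)
  have hq2 := H q hq.ne (1 / 2)
  have hp4 := H p hp.ne' (1 / 4)
  have hq4 := H q hq.ne (1 / 4)
  rw [P] at hp2 hp4
  rw [Q] at hq2 hq4
  rw [← csqrt, csqrt_ofReal (by linarith)] at hp2
  rw [← csqrt, csqrt_ofReal (by linarith), exp_half_pi_mul hτ] at hq2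
  have hpx : 0 < Real.sqrt (x - p) := Real.sqrt_pos.2 (by linarith)
  have hX : Tendsto (fun ε : ℝ => (csqrt ((x : ℂ) + (τ * ε : ℝ) * I - p) +
      σ * csqrt ((x : ℂ) + (τ * ε : ℝ) * I - q)) / 2) (𝓝[>] 0)
      (𝓝 ((Real.sqrt (x - p) + σ * τ * I * Real.sqrt (q - x)) / 2 : ℂ)) := by
    rw [show σ * τ * I * (Real.sqrt (q - x) : ℂ) = σ * (τ * I * Real.sqrt (q - x)) by ring]
    exact (hp2.add (hq2.const_mul σ)).div_const 2
  have hXs : ((Real.sqrt (x - p) + σ * τ * I * Real.sqrt (q - x)) / 2 : ℂ) ∈ slitPlane := by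
    refine Or.inl ?_
    have : ((Real.sqrt (x - p) + σ * τ * I * Real.sqrt (q - x)) / 2 : ℂ).re =
        Real.sqrt (x - p) / 2 := by
      rcases hσ with rfl | rfl <;> simp
    rw [this]
    positivity
  have hne : ∀ y : ℝ, 0 < y → (y : ℂ) ^ (1 / 4 : ℂ) ≠ 0 := fun y hy => by
    simp [cpow_eq_zero_iff, hy.ne']
  unfold entry
  refine (Tendsto.mul ?_ (hX.cpow tendsto_const_nhds hXs)).div (hp4.mul hq4) ?_
  · simpa using h1
  · exact mul_ne_zero (hne _ (by linarith)) (mul_ne_zero (Complex.exp_ne_zero _)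
      (hne _ (by linarith)))

/-! ### The jump -/

/-- The two boundary values of `w ^ s` and `w ^ (-s)` on opposite sides of the cut are related by a
positive factor, because their phases agree. -/
lemma bdryPow_eq {y s t m : ℝ} (hy : y ≠ 0) (ht : t = -s) (hm : m = 2 * s) :
    bdryPow 1 y s = bdryPow (-1) y t * ((|y| ^ m : ℝ) : ℂ) := by
  subst ht hm
  have hreal : ∀ u : ℝ, 0 < u → (u : ℂ) ^ (s : ℂ) =
      (u : ℂ) ^ ((-s : ℝ) : ℂ) * ((u ^ (2 * s) : ℝ) : ℂ) := by
    intro u hu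
    rw [← ofReal_cpow hu.le, ← ofReal_cpow hu.le, ← ofReal_mul, ← Real.rpow_add hu]
    congr 2
    ring
  unfold bdryPow
  split_ifs with h
  · rw [abs_of_neg h, hreal (-y) (by linarith),
      show ((-1 : ℝ) : ℂ) * Real.pi * I * ((-s : ℝ) : ℂ) = ((1 : ℝ) : ℂ) * Real.pi * I * s by
        push_cast; ring]
    ring
  · have hypos : 0 < y := lt_of_le_of_ne (not_lt.1 h) hy.symm
    rw [abs_of_pos hypos, hreal y hypos]

/-! ### The matrix `N` -/

lemma aconst_lt_one {c : ℝ} (hc0 : 0 < c) : aconst c < 1 := by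
  have := Real.sqrt_pos.2 hc0
  rw [aconst, div_lt_one (by positivity)]
  linarith

lemma Nmat_eq (β c : ℝ) (z : ℂ) : Nmat β c z =
    !![entry (((1 - β) / 2 : ℝ) : ℂ) (β : ℂ) 1 (z - 1) (z - aconst c) (z - bconst c),
      -I * entry (((β - 1) / 2 : ℝ) : ℂ) (β : ℂ) (-1) (z - 1) (z - aconst c) (z - bconst c);
      I * entry (((1 - β) / 2 : ℝ) : ℂ) ((2 - β : ℝ) : ℂ) (-1) (z - 1) (z - aconst c)
        (z - bconst c),
      entry (((β - 1) / 2 : ℝ) : ℂ) ((2 - β : ℝ) : ℂ) 1 (z - 1) (z - aconst c)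
        (z - bconst c)] := by
  ext i j
  fin_cases i <;> fin_cases j <;> simp [Nmat, entry, ← sub_eq_add_neg] <;> ring

/-- The boundary value of `entry` on `(p, q)` from the side `τ`. -/
noncomputable def entryBdry (p q x τ s : ℝ) (r : ℂ) (σ : ℂ) : ℂ :=
  bdryPow τ (x - 1) s *
    ((Real.sqrt (x - p) + σ * τ * I * Real.sqrt (q - x)) / 2 : ℂ) ^ r /
    (((x - p : ℝ) : ℂ) ^ (1 / 4 : ℂ) *
      (exp (τ * Real.pi * I * (1 / 4)) * ((q - x : ℝ) : ℂ) ^ (1 / 4 : ℂ)))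

/-- The boundary value of `N` at `x` from the side `τ`. -/
noncomputable def NmatBdry (β c x τ : ℝ) : Matrix (Fin 2) (Fin 2) ℂ :=
  !![entryBdry (aconst c) (bconst c) x τ ((1 - β) / 2) β 1,
    -I * entryBdry (aconst c) (bconst c) x τ ((β - 1) / 2) β (-1);
    I * entryBdry (aconst c) (bconst c) x τ ((1 - β) / 2) ((2 - β : ℝ) : ℂ) (-1),
    entryBdry (aconst c) (bconst c) x τ ((β - 1) / 2) ((2 - β : ℝ) : ℂ) 1]

lemma tendsto_Nmat {β c x τ : ℝ} (hτ : τ = 1 ∨ τ = -1) (ha : aconst c < x) (hb : x < bconst c)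
    (hx : x ≠ 1) :
    Tendsto (fun ε : ℝ => Nmat β c ((x : ℂ) + (τ * ε : ℝ) * I)) (𝓝[>] 0)
      (𝓝 (NmatBdry β c x τ)) := by
  refine tendsto_pi_nhds.2 fun i => tendsto_pi_nhds.2 fun j => ?_
  simp only [Nmat_eq]
  fin_cases i <;> fin_cases j
  · exact tendsto_entry hτ (Or.inl rfl) ha hb hx
  · exact (tendsto_entry hτ (Or.inr rfl) ha hb hx).const_mul (-I)
  · exact (tendsto_entry hτ (Or.inr rfl) ha hb hx).const_mul I
  · exact tendsto_entry hτ (Or.inl rfl) ha hb hx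

lemma exp_quarter_pi_sq : exp ((1 : ℝ) * Real.pi * I * (1 / 4)) ^ 2 = I := by
  rw [← Complex.exp_nat_mul]
  refine Eq.trans (congrArg exp ?_) exp_pi_div_two_mul_I
  push_cast
  ring

/-- Crossing the cut exchanges `√(x-a) + i√(b-x)` with its conjugate, which is why a column of the
boundary value from above is a multiple of the other column from below. -/
lemma entryBdry_jump {p q x s t m : ℝ} {r σ : ℂ} (hx : x ≠ 1) (ht : t = -s) (hm : m = 2 * s) :
    entryBdry p q x 1 s r σ =
      -I * entryBdry p q x (-1) t r (-σ) * ((|x - 1| ^ m : ℝ) : ℂ) := by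
  have he : exp ((-1 : ℝ) * Real.pi * I * (1 / 4)) =
      (exp ((1 : ℝ) * Real.pi * I * (1 / 4)))⁻¹ := by
    rw [← Complex.exp_neg]
    congr 1
    push_cast
    ring
  have h2 := exp_quarter_pi_sq
  have hinv : (exp ((1 : ℝ) * Real.pi * I * (1 / 4)))⁻¹ =
      -I * exp ((1 : ℝ) * Real.pi * I * (1 / 4)) := by
    refine inv_eq_of_mul_eq_one_right ?_
    linear_combination (-I) * h2 - I_mul_I
  unfold entryBdry
  rw [bdryPow_eq (sub_ne_zero.2 hx) ht hm, he]
  generalize exp ((1 : ℝ) * Real.pi * I * (1 / 4)) = e at *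
  rw [show -σ * ((-1 : ℝ) : ℂ) = σ * ((1 : ℝ) : ℂ) by push_cast; ring]
  simp only [div_eq_mul_inv, mul_inv, inv_inv]
  rw [hinv]
  ring

/-- `N` is analytic on `ℂ∖[a,b]` and satisfies the jump relation (3.15) on `(a,b)∖{1}`. -/
theorem Nmat_analytic_and_jump (c β : ℝ) (hc0 : 0 < c) (hc1 : c < 1)
    (hβ1 : 1 ≤ β) (hβ2 : β < 2) :
    (∀ z ∈ Ndom c, ∀ i j : Fin 2, AnalyticAt ℂ (fun w => Nmat β c w i j) z) ∧
    (∀ x : ℝ, aconst c < x → x < bconst c → x ≠ 1 →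
      ∃ Np Nm : Matrix (Fin 2) (Fin 2) ℂ,
        Tendsto (fun ε : ℝ => Nmat β c ((x : ℂ) + (ε : ℂ) * Complex.I)) (𝓝[>] 0) (𝓝 Np) ∧
        Tendsto (fun ε : ℝ => Nmat β c ((x : ℂ) - (ε : ℂ) * Complex.I)) (𝓝[>] 0) (𝓝 Nm) ∧
        Np = Nm * !![0, -(((|x - 1| ^ (β - 1) : ℝ)) : ℂ);
                     (((|x - 1| ^ (1 - β) : ℝ)) : ℂ), 0]) := by
  have ha := aconst_lt_one hc0
  have hb := one_lt_bconst hc0 hc1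
  refine ⟨fun z hz i j => ?_, fun x hax hxb hx =>
    ⟨NmatBdry β c x 1, NmatBdry β c x (-1), ?_, ?_, ?_⟩⟩
  · simp only [Nmat_eq]
    fin_cases i <;> fin_cases j
    · exact analyticAt_entry_sub (Or.inl rfl) (by push_cast; ring) ha hb hz
    · exact analyticAt_const.mul
        (analyticAt_entry_sub (Or.inr rfl) (by push_cast; ring) ha hb hz)
    · exact analyticAt_const.mul
        (analyticAt_entry_sub (Or.inr rfl) (by push_cast; ring) ha hb hz)
    · exact analyticAt_entry_sub (Or.inl rfl) (by push_cast; ring) ha hb hz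
  · simpa using tendsto_Nmat (β := β) (τ := 1) (Or.inl rfl) hax hxb hx
  · simpa [sub_eq_add_neg] using tendsto_Nmat (β := β) (τ := -1) (Or.inr rfl) hax hxb hx
  · have h1 := fun r σ => entryBdry_jump (p := aconst c) (q := bconst c) (r := r) (σ := σ) hx
      (show (β - 1) / 2 = -((1 - β) / 2) by ring) (show 1 - β = 2 * ((1 - β) / 2) by ring)
    have h2 := fun r σ => entryBdry_jump (p := aconst c) (q := bconst c) (r := r) (σ := σ) hx
      (show (1 - β) / 2 = -((β - 1) / 2) by ring) (show β - 1 = 2 * ((β - 1) / 2) by ring)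
    ext i j
    fin_cases i <;> fin_cases j <;>
      simp only [NmatBdry, h1, h2, Matrix.mul_apply, Fin.sum_univ_two, Matrix.of_apply,
        Matrix.cons_val', Matrix.cons_val_zero, Matrix.cons_val_one, Matrix.cons_val_fin_one,
        Fin.zero_eta, Fin.mk_one, neg_neg, mul_zero, zero_add, add_zero]
    · linear_combination (entryBdry (aconst c) (bconst c) x (-1) ((1 - β) / 2) β 1 *
        ((|x - 1| ^ (β - 1) : ℝ) : ℂ)) * I_mul_I
    · linear_combination -(entryBdry (aconst c) (bconst c) x (-1) ((β - 1) / 2)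
        ((2 - β : ℝ) : ℂ) 1 * ((|x - 1| ^ (1 - β) : ℝ) : ℂ)) * I_mul_I
    · ring
end
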